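/- (Grace's Theorem) Let D ⊆ ℂ be a circular domain and let f, g be complex polynomials, both of degree exactly n ≥ 1, which are apolar, i.e. [f,g]_n = 0. If all zeros of f are contained in D, then g has at least one zero in D. -/

import Mathlib

open Polynomial

/-- The apolarity form `[f,g]_m`. -/
noncomputable def apol (m : ℕ) (f g : Polynomial ℂ) : ℂ :=
  ∑ k ∈ Finset.range (m + 1),
    (-1 : ℂ) ^ k * ((m.choose k : ℂ))⁻¹ * f.coeff k * g.coeff (m - k)

/-- The symmetrization `Sym_N(f)` of a polynomial, as a function on `ι → ℂ`
with `N = card ι`. -/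
noncomputable def symFun {ι : Type*} [Fintype ι] (f : Polynomial ℂ) (y : ι → ℂ) : ℂ :=
  ∑ k ∈ Finset.range (Fintype.card ι + 1),
    (((Fintype.card ι).choose k : ℂ))⁻¹ * f.coeff k *
      MvPolynomial.eval y (MvPolynomial.esymm ι ℂ k)

/-- A circular domain: an open or closed disk or half-plane, or a complement thereof. -/
def IsCircularDomain (D : Set ℂ) : Prop :=
  ∃ (α γ : ℝ) (β : ℂ),
    D = {z : ℂ | α * Complex.normSq z + ((starRingEnd ℂ) β * z).re + γ < 0} ∨
    D = {z : ℂ | α * Complex.normSq z + ((starRingEnd ℂ) β * z).re + γ ≤ 0}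

/-- `q_∘(D) = {u : q⁻¹(u) ⊆ D}`. -/
def innerImage (q : Polynomial ℂ) (D : Set ℂ) : Set ℂ :=
  {u : ℂ | ∀ z : ℂ, q.eval z = u → z ∈ D}

/-- `S_{q,n}(f)(u₁,…,uₙ) = [f∘q, ∏ⱼ (q - uⱼ)]_{nd}`. -/
noncomputable def Sfun (q : Polynomial ℂ) (n : ℕ) (f : Polynomial ℂ) (u : Fin n → ℂ) : ℂ :=
  apol (n * q.natDegree) (f.comp q) (∏ j, (q - Polynomial.C (u j)))

/-- The Fischer inner product `⟨f,g⟩_n`. -/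
noncomputable def fischer (n : ℕ) (f g : Polynomial ℂ) : ℂ :=
  ∑ k ∈ Finset.range (n + 1),
    ((n.choose k : ℂ))⁻¹ * f.coeff k * (starRingEnd ℂ) (g.coeff k)

/-- The real quadratic function `α|z|² + Re(β̄z) + γ` on the complex plane. -/
noncomputable def circularForm (α γ : ℝ) (β : ℂ) (z : ℂ) : ℝ :=
  α * Complex.normSq z + ((starRingEnd ℂ) β * z).re + γ

lemma convexOn_circularForm {α : ℝ} (hα : 0 ≤ α) (γ : ℝ) (β : ℂ) :
    ConvexOn ℝ Set.univ (circularForm α γ β) := by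
  refine ⟨convex_univ, fun x _ y _ a b ha hb hab => ?_⟩
  obtain rfl : b = 1 - a := by linarith
  have h : 0 ≤ α * (a * (1 - a)) * ((x.re - y.re) ^ 2 + (x.im - y.im) ^ 2) := by positivity
  simp only [circularForm, Complex.normSq_apply, Complex.add_re, Complex.add_im, Complex.mul_re,
    Complex.conj_re, Complex.conj_im, Complex.real_smul, Complex.mul_im, Complex.ofReal_re,
    Complex.ofReal_im, smul_eq_mul]
  linarith

/-- The inversion `d ↦ d⁻¹` about `ζ` transforms one quadratic form into another whose leading
coefficient is the value of the original form at `ζ`. -/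
lemma circularForm_inv (α γ : ℝ) (β ζ : ℂ) {d : ℂ} (hd : d ≠ 0) :
    circularForm (circularForm α γ β ζ) α ((starRingEnd ℂ) (-2 * α * ζ - β)) d⁻¹ =
      circularForm α γ β (ζ - d) / Complex.normSq d := by
  have h : Complex.normSq d ≠ 0 := by simpa using hd
  rw [eq_div_iff h]
  have h1 : Complex.normSq d⁻¹ * Complex.normSq d = 1 := by
    rw [← Complex.normSq_mul, inv_mul_cancel₀ hd, map_one]
  have h2 : d⁻¹.re * Complex.normSq d = d.re := by
    rw [Complex.inv_re, div_mul_cancel₀ _ h]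
  have h3 : d⁻¹.im * Complex.normSq d = -d.im := by
    rw [Complex.inv_im, div_mul_cancel₀ _ h]
  simp only [circularForm, Complex.mul_re, Complex.sub_re, Complex.sub_im, Complex.mul_im,
    Complex.conj_re, Complex.conj_im, Complex.ofReal_re, Complex.ofReal_im, Complex.neg_re,
    Complex.neg_im, Complex.re_ofNat, Complex.im_ofNat] at *
  generalize Complex.normSq d⁻¹ = N at *
  generalize d⁻¹.re = r at *
  generalize d⁻¹.im = s at *
  simp only [Complex.normSq_apply, Complex.sub_re, Complex.sub_im] at *
  linear_combination
    (α * (ζ.re * ζ.re + ζ.im * ζ.im) + (β.re * ζ.re - -β.im * ζ.im) + γ) * h1 +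
    (-2 * α * ζ.re - β.re) * h2 - (-2 * α * ζ.im - β.im) * h3

/-- A convex set whose images under all inversions about points outside of it are convex. -/
def InversionConvex (D : Set ℂ) : Prop :=
  Convex ℝ D ∧ ∀ ζ ∉ D, ∃ K : Set ℂ, Convex ℝ K ∧ ∀ z, z ≠ ζ → (z ∈ D ↔ (ζ - z)⁻¹ ∈ K)

lemma inversionConvex_lt {α : ℝ} (hα : 0 ≤ α) (γ : ℝ) (β : ℂ) :
    InversionConvex {z | circularForm α γ β z < 0} := by
  refine ⟨by simpa using (convexOn_circularForm hα γ β).convex_lt 0, fun ζ hζ => ?_⟩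
  simp only [Set.mem_ofPred_eq, not_lt] at hζ
  refine ⟨_, by simpa only [Set.mem_univ, true_and] using (convexOn_circularForm hζ α
    ((starRingEnd ℂ) (-2 * α * ζ - β))).convex_lt 0, fun z hz => ?_⟩
  have hd : ζ - z ≠ 0 := sub_ne_zero.2 hz.symm
  have hpos : 0 < Complex.normSq (ζ - z) := Complex.normSq_pos.2 hd
  simp only [Set.mem_ofPred_eq]
  rw [circularForm_inv α γ β ζ hd, div_lt_iff₀ hpos, zero_mul, sub_sub_cancel]

lemma inversionConvex_le {α : ℝ} (hα : 0 ≤ α) (γ : ℝ) (β : ℂ) :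
    InversionConvex {z | circularForm α γ β z ≤ 0} := by
  refine ⟨by simpa using (convexOn_circularForm hα γ β).convex_le 0, fun ζ hζ => ?_⟩
  simp only [Set.mem_ofPred_eq, not_le] at hζ
  refine ⟨_, by simpa only [Set.mem_univ, true_and] using (convexOn_circularForm hζ.le α
    ((starRingEnd ℂ) (-2 * α * ζ - β))).convex_le 0, fun z hz => ?_⟩
  have hd : ζ - z ≠ 0 := sub_ne_zero.2 hz.symm
  have hpos : 0 < Complex.normSq (ζ - z) := Complex.normSq_pos.2 hd
  simp only [Set.mem_ofPred_eq]
  rw [circularForm_inv α γ β ζ hd, div_le_iff₀ hpos, zero_mul, sub_sub_cancel]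

lemma IsCircularDomain.inversionConvex_or_compl {D : Set ℂ} (hD : IsCircularDomain D) :
    InversionConvex D ∨ InversionConvex Dᶜ := by
  obtain ⟨α, γ, β, hD⟩ := hD
  have hneg (z : ℂ) : circularForm (-α) (-γ) (-β) z = -circularForm α γ β z := by
    simp only [circularForm, map_neg, neg_mul, Complex.neg_re]
    ring
  rcases le_total 0 α with hα | hα
  · left
    rcases hD with rfl | rfl
    · exact inversionConvex_lt hα γ β
    · exact inversionConvex_le hα γ β
  · right
    rcases hD with rfl | rfl
    · convert inversionConvex_le (neg_nonneg.2 hα) (-γ) (-β) using 1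
      ext z
      change ¬circularForm α γ β z < 0 ↔ circularForm (-α) (-γ) (-β) z ≤ 0
      rw [hneg, not_lt, neg_nonpos]
    · convert inversionConvex_lt (neg_nonneg.2 hα) (-γ) (-β) using 1
      ext z
      change ¬circularForm α γ β z ≤ 0 ↔ circularForm (-α) (-γ) (-β) z < 0
      rw [hneg, not_le, neg_lt_zero]

lemma Convex.multiset_average_mem {K : Set ℂ} (hK : Convex ℝ K) (s : Multiset ℂ)
    (hs : s ≠ 0) (h : ∀ x ∈ s, x ∈ K) : s.sum / (Multiset.card s : ℂ) ∈ K := by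
  have hc : (Multiset.card s : ℝ) ≠ 0 := by simpa using hs
  have hsum : ∑ x : s, (x : ℂ) = s.sum := by
    rw [Finset.sum, Multiset.map_univ_coe]
  have := hK.sum_mem (t := (Finset.univ : Finset s)) (w := fun _ => (Multiset.card s : ℝ)⁻¹)
    (z := fun x => (x : ℂ)) (fun _ _ => by positivity) (by simp [hc])
    (fun x _ => h _ (Multiset.coe_mem))
  rw [← Finset.smul_sum, hsum] at this
  convert this using 1
  simp [div_eq_inv_mul]

/-- The polar derivative `m f - (X - w) f'` of a polynomial `f` of formal degree `m`. -/
noncomputable def polarDerivative (m : ℕ) (w : ℂ) (f : ℂ[X]) : ℂ[X] :=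
  C (m : ℂ) * f - (X - C w) * derivative f

lemma coeff_polarDerivative (m : ℕ) (w : ℂ) (f : ℂ[X]) (k : ℕ) :
    (polarDerivative m w f).coeff k =
      ((m : ℂ) - k) * f.coeff k + w * (k + 1) * f.coeff (k + 1) := by
  rw [polarDerivative, sub_mul]
  cases k
  · simp [coeff_derivative, mul_coeff_zero]
  · simp [coeff_derivative]
    ring

/-- Polar derivatives with pole `w` are adjoint to multiplication by `X - w`. -/
lemma apol_X_sub_C_mul (m : ℕ) (w : ℂ) (f h : ℂ[X]) (hh : h.natDegree ≤ m) :
    apol (m + 1) f ((X - C w) * h) =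
      ((m : ℂ) + 1)⁻¹ * apol m (polarDerivative (m + 1) w f) h := by
  have hm : (m : ℂ) + 1 ≠ 0 := Nat.cast_add_one_ne_zero m
  have h1 : apol (m + 1) f (X * h) = ∑ k ∈ Finset.range (m + 1),
      (-1 : ℂ) ^ k * (((m + 1).choose k : ℂ))⁻¹ * f.coeff k * h.coeff (m - k) := by
    rw [apol, Finset.sum_range_succ]
    simp only [Nat.sub_self, coeff_X_mul_zero, mul_zero, add_zero]
    refine Finset.sum_congr rfl fun k hk => ?_
    rw [Nat.succ_sub (Finset.mem_range_succ_iff.1 hk), Nat.succ_eq_add_one, coeff_X_mul]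
  have h2 : apol (m + 1) f h = -∑ k ∈ Finset.range (m + 1),
      (-1 : ℂ) ^ k * (((m + 1).choose (k + 1) : ℂ))⁻¹ * f.coeff (k + 1) * h.coeff (m - k) := by
    rw [apol, Finset.sum_range_succ', Nat.sub_zero,
      coeff_eq_zero_of_natDegree_lt (Nat.lt_succ_of_le hh), mul_zero, add_zero,
      ← Finset.sum_neg_distrib]
    refine Finset.sum_congr rfl fun k _ => ?_
    rw [Nat.add_sub_add_right, pow_succ]
    ring
  have h3 : apol (m + 1) f ((X - C w) * h) = apol (m + 1) f (X * h) - w * apol (m + 1) f h := by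
    simp only [apol, sub_mul, coeff_sub, coeff_C_mul, Finset.mul_sum, ← Finset.sum_sub_distrib]
    refine Finset.sum_congr rfl fun k _ => ?_
    ring
  rw [h3, h1, h2, apol, mul_neg, sub_neg_eq_add, Finset.mul_sum, Finset.mul_sum,
    ← Finset.sum_add_distrib]
  refine Finset.sum_congr rfl fun k hk => ?_
  have hk : k ≤ m := Finset.mem_range_succ_iff.1 hk
  have c0 : (m.choose k : ℂ) ≠ 0 := Nat.cast_ne_zero.2 (Nat.choose_pos hk).ne'
  have c1 : ((m + 1).choose k : ℂ) ≠ 0 :=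
    Nat.cast_ne_zero.2 (Nat.choose_pos (hk.trans m.le_succ)).ne'
  have c2 : ((m + 1).choose (k + 1) : ℂ) ≠ 0 :=
    Nat.cast_ne_zero.2 (Nat.choose_pos (Nat.succ_le_succ hk)).ne'
  have e1 : (m.choose k : ℂ) * (m + 1) = (m + 1).choose k * (m + 1 - k) := by
    have := Nat.choose_mul_succ_eq m k
    rw [← Nat.cast_inj (R := ℂ)] at this
    push_cast [Nat.cast_sub (hk.trans m.le_succ)] at this
    exact this
  have e2 : ((m : ℂ) + 1) * m.choose k = (m + 1).choose (k + 1) * (k + 1) := by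
    exact_mod_cast Nat.add_one_mul_choose_eq m k
  have i1 : (((m + 1).choose k : ℂ))⁻¹ = (m + 1 - k) * ((m : ℂ) + 1)⁻¹ * (m.choose k : ℂ)⁻¹ := by
    field_simp
    linear_combination e1
  have i2 : (((m + 1).choose (k + 1) : ℂ))⁻¹ =
      (k + 1) * ((m : ℂ) + 1)⁻¹ * (m.choose k : ℂ)⁻¹ := by
    field_simp
    linear_combination e2
  rw [coeff_polarDerivative, i1, i2]
  push_cast
  ring

lemma apol_comm (n : ℕ) (f g : ℂ[X]) : apol n g f = (-1) ^ n * apol n f g := by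
  rw [apol, apol, ← Finset.sum_range_reflect, Finset.mul_sum]
  refine Finset.sum_congr rfl fun k hk => ?_
  have hk : k ≤ n := Finset.mem_range_succ_iff.1 hk
  have hs : (-1 : ℂ) ^ (n - k) = (-1) ^ n * (-1) ^ k := by
    obtain ⟨j, rfl⟩ := Nat.exists_eq_add_of_le hk
    rw [Nat.add_sub_cancel_left, pow_add, mul_right_comm, ← mul_pow]
    simp
  rw [Nat.add_sub_cancel, Nat.sub_sub_self hk, Nat.choose_symm hk, hs]
  ring

lemma natDegree_polarDerivative {D : Set ℂ} (hD : Convex ℝ D) {m : ℕ} {f : ℂ[X]}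
    (hf : f.natDegree = m + 1) (hroots : ∀ z, f.IsRoot z → z ∈ D) {w : ℂ} (hw : w ∉ D) :
    (polarDerivative (m + 1) w f).natDegree = m ∧ polarDerivative (m + 1) w f ≠ 0 := by
  have hf0 : f ≠ 0 := by rintro rfl; simp at hf
  have hsplit : f.Splits := IsAlgClosed.splits f
  have hcard : Multiset.card f.roots = m + 1 := by rw [← hsplit.natDegree_eq_card_roots, hf]
  have hne : (polarDerivative (m + 1) w f).coeff m ≠ 0 := by
    have hm : (m : ℂ) + 1 ≠ 0 := Nat.cast_add_one_ne_zero m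
    have hnext := hsplit.nextCoeff_eq_neg_sum_roots_mul_leadingCoeff
    rw [nextCoeff_of_natDegree_pos (by omega), hf, Nat.add_sub_cancel] at hnext
    have hlead : f.coeff (m + 1) = f.leadingCoeff := by rw [leadingCoeff, hf]
    rw [coeff_polarDerivative, hnext, hlead]
    intro h
    have hl : f.leadingCoeff ≠ 0 := leadingCoeff_ne_zero.2 hf0
    have hmul : f.leadingCoeff * (w * (m + 1) - f.roots.sum) = 0 := by
      push_cast at h
      linear_combination h
    have hsum := (mul_eq_zero.1 hmul).resolve_left hl
    have havg := hD.multiset_average_mem f.roots (by rw [← Multiset.card_pos]; omega)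
      fun z hz => hroots z (isRoot_of_mem_roots hz)
    refine hw ?_
    convert havg using 1
    rw [hcard, eq_div_iff (by exact_mod_cast hm)]
    push_cast
    linear_combination hsum
  refine ⟨natDegree_eq_of_le_of_coeff_ne_zero ?_ hne, fun h => hne (by simp [h])⟩
  rw [natDegree_le_iff_coeff_eq_zero]
  intro k hk
  rw [coeff_polarDerivative, coeff_eq_zero_of_natDegree_lt (n := k + 1) (by omega)]
  rcases (Nat.succ_le_of_lt hk).eq_or_lt with rfl | hk
  · simp
  · rw [coeff_eq_zero_of_natDegree_lt (by omega)]
    simp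

/-- Laguerre's theorem on the zeros of polar derivatives. -/
lemma isRoot_polarDerivative_mem {D : Set ℂ} (hD : InversionConvex D) {n : ℕ} (hn : 1 ≤ n)
    {f : ℂ[X]} (hf : f.natDegree = n) (hroots : ∀ z, f.IsRoot z → z ∈ D) {w : ℂ} (hw : w ∉ D)
    {ζ : ℂ} (hζ : (polarDerivative n w f).IsRoot ζ) : ζ ∈ D := by
  by_contra hζD
  have hfζ : f.eval ζ ≠ 0 := fun h => hζD (hroots ζ h)
  have hn0 : (n : ℂ) ≠ 0 := Nat.cast_ne_zero.2 (by omega)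
  have hpol : (n : ℂ) * f.eval ζ - (ζ - w) * f.derivative.eval ζ = 0 := by
    simpa [polarDerivative] using hζ
  have hwζ : w ≠ ζ := by
    rintro rfl
    simp [hn0, hfζ] at hpol
  have hd : ζ - w ≠ 0 := sub_ne_zero.2 hwζ.symm
  have hsplit : f.Splits := IsAlgClosed.splits f
  have hcard : Multiset.card f.roots = n := by rw [← hsplit.natDegree_eq_card_roots, hf]
  obtain ⟨K, hK, hDK⟩ := hD.2 ζ hζD
  have havg := hK.multiset_average_mem (f.roots.map fun z => 1 / (ζ - z))
    (by rw [← Multiset.card_pos, Multiset.card_map]; omega) fun x hx => by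
      obtain ⟨z, hz, rfl⟩ := Multiset.mem_map.1 hx
      have hz := hroots z (isRoot_of_mem_roots hz)
      rw [one_div]
      exact (hDK z (by rintro rfl; exact hζD hz)).1 hz
  rw [← hsplit.eval_derivative_div_eval_of_ne_zero hfζ, Multiset.card_map, hcard] at havg
  refine hw ((hDK w hwζ).2 ?_)
  convert havg using 1
  field_simp
  linear_combination hpol

lemma apol_ne_zero {D : Set ℂ} (hD : InversionConvex D) (n : ℕ) (f g : ℂ[X]) (hf0 : f ≠ 0)
    (hg0 : g ≠ 0) (hf : f.natDegree = n) (hg : g.natDegree = n)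
    (hfD : ∀ z, f.IsRoot z → z ∈ D) (hgD : ∀ z, g.IsRoot z → z ∉ D) : apol n f g ≠ 0 := by
  induction n generalizing f g with
  | zero =>
    have h1 : f.coeff 0 ≠ 0 := by rw [← hf]; exact leadingCoeff_ne_zero.2 hf0
    have h2 : g.coeff 0 ≠ 0 := by rw [← hg]; exact leadingCoeff_ne_zero.2 hg0
    simp [apol, h1, h2]
  | succ m ih =>
    obtain ⟨w, hw⟩ := IsAlgClosed.exists_root g fun h => by
      have := natDegree_eq_zero_iff_degree_le_zero.2 h.le
      omega
    obtain ⟨h, rfl⟩ := dvd_iff_isRoot.2 hw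
    have hh0 : h ≠ 0 := right_ne_zero_of_mul hg0
    have hh : h.natDegree = m := by
      rw [natDegree_mul (X_sub_C_ne_zero w) hh0, natDegree_X_sub_C] at hg
      omega
    have hwD := hgD w hw
    obtain ⟨hdeg, hne⟩ := natDegree_polarDerivative hD.1 hf hfD hwD
    rw [apol_X_sub_C_mul m w f h hh.le]
    refine mul_ne_zero (inv_ne_zero (Nat.cast_add_one_ne_zero m)) (ih _ h hne hh0 hdeg hh
      (fun z hz => isRoot_polarDerivative_mem hD m.succ_pos hf hfD hwD hz)
      fun z hz => hgD z (root_mul_left_of_isRoot _ hz))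

/-- Grace's Theorem. -/
theorem stmt_2 (D : Set ℂ) (hD : IsCircularDomain D) (n : ℕ) (hn : 1 ≤ n)
    (f g : Polynomial ℂ) (hf : f.natDegree = n) (hg : g.natDegree = n)
    (hap : apol n f g = 0)
    (hroots : ∀ z : ℂ, f.IsRoot z → z ∈ D) :
    ∃ z ∈ D, g.IsRoot z := by
  by_contra! hcon
  have hf0 : f ≠ 0 := by rintro rfl; simp at hf; omega
  have hg0 : g ≠ 0 := by rintro rfl; simp at hg; omega
  have hgD : ∀ z, g.IsRoot z → z ∉ D := fun z hz hzD => hcon z hzD hz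
  rcases hD.inversionConvex_or_compl with hc | hc
  · exact apol_ne_zero hc n f g hf0 hg0 hf hg hroots hgD hap
  · refine apol_ne_zero hc n g f hg0 hf0 hg hf hgD (fun z hz h => h (hroots z hz)) ?_
    rw [apol_comm, hap, mul_zero]
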